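/- arXiv:1710.00374 — 2 statements merged into one kernel-verified Lean document; each statement's English description precedes it below -/
import Mathlib

section
/- Let ℓ ≥ 2 and let F be any (0,1)-matrix with exactly two columns. Then there is a constant c such that for all m ≥ 1, forb(m, 3, (𝒯_ℓ(3) \ 𝒯_ℓ(2)) ∪ {F}) ≤ c · Σ_{k=0}^{m} forbmax_k(m, F). -/
/-- A matrix with natural number entries, of size `k × p`. -/
abbrev MatN (k p : ℕ) := Matrix (Fin k) (Fin p) ℕ

/-- A matrix bundled with its dimensions. -/
structure CMat where
  rows : ℕ
  cols : ℕ
  mat : MatN rows cols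

/-- A matrix is simple if no two of its columns are equal. -/
def SimpleM {m n : ℕ} (A : MatN m n) : Prop :=
  ∀ j₁ j₂ : Fin n, (∀ i, A i j₁ = A i j₂) → j₁ = j₂

/-- An `r`-matrix: all entries lie in `{0, 1, …, r-1}`. -/
def RMat (r : ℕ) {m n : ℕ} (A : MatN m n) : Prop := ∀ i j, A i j < r

/-- `F` is a configuration of `A` (written `F ≺ A`): some submatrix of `A` is a row
and column permutation of `F`; equivalently there are injections of the rows and
columns of `F` into those of `A` realizing the entries of `F`. -/
def IsConfig {k p m n : ℕ} (F : MatN k p) (A : MatN m n) : Prop :=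
  ∃ f : Fin k → Fin m, ∃ g : Fin p → Fin n,
    Function.Injective f ∧ Function.Injective g ∧ ∀ i j, A (f i) (g j) = F i j

/-- `A` avoids every matrix of the family `𝓕` as a configuration. -/
def AvoidsFam {m n : ℕ} (A : MatN m n) (𝓕 : Set CMat) : Prop :=
  ∀ F ∈ 𝓕, ¬ IsConfig F.mat A

/-- `forb m r 𝓕`: the maximum number of columns of an `m`-rowed simple `r`-matrix
having no member of `𝓕` as a configuration. -/
noncomputable def forb (m r : ℕ) (𝓕 : Set CMat) : ℕ :=
  sSup { n : ℕ | ∃ A : MatN m n, RMat r A ∧ SimpleM A ∧ AvoidsFam A 𝓕 }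

/-- `forbmax m r 𝓕`: the maximum of `forb m' r 𝓕` over `m' ≤ m`. -/
noncomputable def forbmax (m r : ℕ) (𝓕 : Set CMat) : ℕ :=
  sSup { x : ℕ | ∃ m' ≤ m, x = forb m' r 𝓕 }

/-- The number of 1's in column `j` of `A` (the column sum). -/
def colSum {m n : ℕ} (A : MatN m n) (j : Fin n) : ℕ :=
  (Finset.univ.filter (fun i => A i j = 1)).card

/-- `forbK k m r 𝓕`: as `forb`, but restricted to matrices all of whose columns
have exactly `k` entries equal to 1. -/
noncomputable def forbK (k m r : ℕ) (𝓕 : Set CMat) : ℕ :=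
  sSup { n : ℕ | ∃ A : MatN m n, RMat r A ∧ SimpleM A ∧ (∀ j, colSum A j = k) ∧
    AvoidsFam A 𝓕 }

/-- `forbmaxK k m r 𝓕`: the maximum of `forbK k m' r 𝓕` over `m' ≤ m`. -/
noncomputable def forbmaxK (k m r : ℕ) (𝓕 : Set CMat) : ℕ :=
  sSup { x : ℕ | ∃ m' ≤ m, x = forbK k m' r 𝓕 }

/-- `Imat ℓ a b`: the `ℓ × ℓ` matrix with `a` on the diagonal and `b` off the diagonal. -/
def Imat (ℓ a b : ℕ) : MatN ℓ ℓ := fun i j => if i = j then a else b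

/-- `Tmat ℓ a b`: the `ℓ × ℓ` matrix with `a` below the diagonal and `b` on or above it. -/
def Tmat (ℓ a b : ℕ) : MatN ℓ ℓ := fun i j => if (j : ℕ) < (i : ℕ) then a else b

/-- `Tmat3 ℓ a b c`: the `ℓ × ℓ` matrix with `a` below, `b` on, and `c` above the diagonal. -/
def Tmat3 (ℓ a b c : ℕ) : MatN ℓ ℓ :=
  fun i j => if (j : ℕ) < (i : ℕ) then a else if i = j then b else c

/-- The family `𝒯_ℓ(r)` of all `I_ℓ(a,b)` and `T_ℓ(a,b)` with `a,b ∈ {0,…,r-1}`, `a ≠ b`. -/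
def TFam (ℓ r : ℕ) : Set CMat :=
  { M | ∃ a b : ℕ, a < r ∧ b < r ∧ a ≠ b ∧
      (M = ⟨ℓ, ℓ, Imat ℓ a b⟩ ∨ M = ⟨ℓ, ℓ, Tmat ℓ a b⟩) }

/-- `t·F`: the concatenation of `t` copies of `F` side by side. -/
def tcopies {k p : ℕ} (t : ℕ) (F : MatN k p) : MatN k (t * p) :=
  fun i j => F i ⟨(j : ℕ) % p, Nat.mod_lt _ (by
    rcases Nat.eq_zero_or_pos p with h | h
    · exact absurd j.isLt (by simp [h])
    · exact h)⟩

/-- `0×1×F`: `F` with an extra row of 0's and an extra row of 1's appended. -/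
def zeroOneTop {k p : ℕ} (F : MatN k p) : MatN (k + 2) p :=
  fun i j => if h : (i : ℕ) < k then F ⟨i, h⟩ j else if (i : ℕ) = k then 0 else 1

/-- `F_{a,b,c,d}`: the `(a+b+c+d) × 2` matrix with `a` rows `[1 1]`, `b` rows `[1 0]`,
`c` rows `[0 1]` and `d` rows `[0 0]`. -/
def Fabcd (a b c d : ℕ) : MatN (a + b + c + d) 2 :=
  fun i j =>
    if (i : ℕ) < a then 1
    else if (i : ℕ) < a + b then (if (j : ℕ) = 0 then 1 else 0)
    else if (i : ℕ) < a + b + c then (if (j : ℕ) = 0 then 0 else 1)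
    else 0

/-!
Call the set of rows in which a column has the entry 2 its 2-support. Sort the columns by column sum
and then by 2-support. Deleting the rows of a 2-support turns the columns sharing it into a simple
(0,1)-matrix with the same column sum, so it suffices to bound the number of 2-supports occurring
among the columns of one column sum `k` by a constant independent of `k` and `m`.

Suppose there are many. Ramsey's theorem for triples makes the rows that distinguish the 2-supports
of two columns look alike; avoiding `𝒯_ℓ(3) \ 𝒯_ℓ(2)` forces them to read `0 ⋯ 0 ∗ ⋯ ∗ 1 ⋯ 1` or
the reverse, which yields a large triangular matrix `T(0,1)`. Columns of it that are far apart have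
many common rows `00`, `01` and `11`. If some pair of them also has many rows `10`, these four kinds
of rows contain `F`. Otherwise the equality of the column sums provides, for every pair, a row `12`,
and a second application of Ramsey's theorem to these rows produces a pair with many rows `10`.
-/

open scoped Finset

section Ramsey

universe u

variable {κ : Type*} {α : Type u} [LinearOrder α]

/-- A set `T` is homogeneous for a colouring `c` of `k`-tuples if all increasing `k`-tuples of
elements of `T` have the same colour. Increasing tuples encode the `k`-element subsets. -/
def HomogeneousOn {k : ℕ} (c : (Fin k → α) → κ) (T : Finset α) : Prop :=
  ∃ x, ∀ s, StrictMono s → (∀ i, s i ∈ T) → c s = x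

/-- A set `T` is end-homogeneous for a colouring `c` of `(k + 1)`-tuples if the colour of an
increasing tuple of elements of `T` depends only on its first element. -/
def EndHomogeneousOn {k : ℕ} (c : (Fin (k + 1) → α) → κ) (T : Finset α) : Prop :=
  ∃ h : α → κ, ∀ s, StrictMono s → (∀ i, s i ∈ T) → c s = h (s 0)

theorem EndHomogeneousOn.insert_of_lt {k : ℕ} {c : (Fin (k + 1) → α) → κ} {v : α} {S T : Finset α}
    (hT : EndHomogeneousOn c T) (hTS : T ⊆ S) (hv : ∀ a ∈ S, v < a)
    (hS : HomogeneousOn (fun s => c (Fin.cons v s)) S) : EndHomogeneousOn c (insert v T) := by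
  obtain ⟨h, hh⟩ := hT
  obtain ⟨x, hx⟩ := hS
  refine ⟨Function.update h v x, fun s hs hsT => ?_⟩
  have mem_of_lt {a b : α} (ha : a ∈ insert v T) (hb : b ∈ insert v T) (hab : a < b) : b ∈ T := by
    refine (Finset.mem_insert.1 hb).resolve_left fun hbv => ?_
    rcases Finset.mem_insert.1 ha with rfl | ha
    · exact hab.ne' hbv
    · exact (hv a (hTS ha)).not_gt (hbv ▸ hab)
  have htail (i : Fin k) : s i.succ ∈ T :=
    mem_of_lt (hsT 0) (hsT i.succ) (hs (Fin.succ_pos i))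
  rcases Finset.mem_insert.1 (hsT 0) with h0 | h0
  · calc
      c s = c (Fin.cons v (Fin.tail s)) := by rw [← h0, Fin.cons_self_tail]
      _ = x := hx _ (hs.comp Fin.strictMono_succ) fun i => hTS (htail i)
      _ = Function.update h v x (s 0) := by rw [h0, Function.update_self]
  · rw [Function.update_of_ne (hv _ (hTS h0)).ne']
    exact hh s hs (Fin.cases h0 htail)

variable (κ)

theorem exists_endHomogeneousOn [Nonempty κ] {k : ℕ}
    (ramsey : ∀ L : ℕ, ∃ n : ℕ, ∀ {α : Type u} [LinearOrder α] (S : Finset α), n ≤ #S →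
      ∀ c : (Fin k → α) → κ, ∃ T ⊆ S, L ≤ #T ∧ HomogeneousOn c T) (L : ℕ) :
    ∃ n : ℕ, ∀ {α : Type u} [LinearOrder α] (S : Finset α), n ≤ #S →
      ∀ c : (Fin (k + 1) → α) → κ, ∃ T ⊆ S, L ≤ #T ∧ EndHomogeneousOn c T := by
  induction L with
  | zero =>
    refine ⟨0, fun {α} _ S _ _ => ⟨∅, S.empty_subset, Nat.zero_le _, ?_⟩⟩
    exact ⟨fun _ => Classical.arbitrary κ, fun s _ hs => absurd (hs 0) (Finset.notMem_empty _)⟩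
  | succ L ih =>
    obtain ⟨n, hn⟩ := ih
    obtain ⟨N, hN⟩ := ramsey n
    refine ⟨N + 1, fun {α} _ S hS c => ?_⟩
    have hne : S.Nonempty := Finset.card_pos.1 (by omega)
    set v := S.min' hne
    have hvS : v ∈ S := S.min'_mem hne
    obtain ⟨S', hS', hcard, hhom⟩ := hN (S.erase v)
      (by rw [Finset.card_erase_of_mem hvS]; omega) (fun s => c (Fin.cons v s))
    obtain ⟨T, hT, hLT, hend⟩ := hn S' hcard c
    have hv : ∀ a ∈ S', v < a := fun a ha => S.min'_lt_of_mem_erase_min' hne (hS' ha)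
    refine ⟨insert v T, Finset.insert_subset hvS ?_, ?_, hend.insert_of_lt hT hv hhom⟩
    · exact (hT.trans hS').trans (S.erase_subset v)
    · rw [Finset.card_insert_of_notMem fun h => (hv v (hT h)).false]
      omega

theorem exists_homogeneousOn [Finite κ] [Nonempty κ] (k L : ℕ) :
    ∃ n : ℕ, ∀ {α : Type u} [LinearOrder α] (S : Finset α), n ≤ #S →
      ∀ c : (Fin k → α) → κ, ∃ T ⊆ S, L ≤ #T ∧ HomogeneousOn c T := by
  classical
  cases nonempty_fintype κ
  induction k generalizing L with
  | zero =>
    exact ⟨L, fun {α} _ S hS c => ⟨S, subset_rfl, hS, c ![], fun s _ _ =>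
      congrArg c (Subsingleton.elim _ _)⟩⟩
  | succ k ih =>
    obtain ⟨n, hn⟩ := exists_endHomogeneousOn κ ih (Fintype.card κ * L)
    refine ⟨n, fun {α} _ S hS c => ?_⟩
    obtain ⟨T, hTS, hcard, h, hh⟩ := hn S hS c
    obtain ⟨x, -, hx⟩ := Finset.exists_le_card_fiber_of_mul_le_card_of_maps_to
      (t := Finset.univ) (fun a _ => Finset.mem_univ (h a)) Finset.univ_nonempty hcard
    refine ⟨T.filter (h · = x), (T.filter_subset _).trans hTS, hx, x, fun s hs hsT => ?_⟩
    rw [hh s hs fun i => (Finset.mem_filter.1 (hsT i)).1, (Finset.mem_filter.1 (hsT 0)).2]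

end Ramsey

theorem exists_orderEmb_forall_eq (κ : Type*) [Finite κ] [Nonempty κ] (L : ℕ) :
    ∃ n : ℕ, ∀ c : Fin n → Fin n → Fin n → κ, ∃ (g : Fin L ↪o Fin n) (x : κ),
      ∀ i j k, i < j → j < k → c (g i) (g j) (g k) = x := by
  obtain ⟨n, hn⟩ := exists_homogeneousOn κ 3 L
  refine ⟨n, fun c => ?_⟩
  obtain ⟨T, -, hcard, x, hx⟩ := hn Finset.univ (Finset.card_fin n).ge
    (fun s : Fin 3 → Fin n => c (s 0) (s 1) (s 2))
  let g := T.orderEmbOfCardLe hcard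
  have hg (i : Fin L) : g i ∈ T := T.orderEmbOfCardLe_mem hcard i
  refine ⟨g, x, fun i j k hij hjk => hx ![g i, g j, g k] ?_ ?_⟩
  · simp [hij, hjk]
  · simp [Fin.forall_fin_succ, hg]

theorem exists_injective_comp_of_le_card_image {α β : Type*} [Fintype α] [DecidableEq β]
    {f : α → β} {N : ℕ} (h : N ≤ #(Finset.univ.image f)) :
    ∃ g : Fin N → α, Function.Injective (f ∘ g) := by
  obtain ⟨T, hT, rfl⟩ := Finset.exists_subset_card_eq h
  have hpre (b : T) : ∃ a, f a = b := by
    simpa using hT b.2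
  choose g hg using hpre
  refine ⟨g ∘ T.equivFin.symm, ?_⟩
  have hcomp : f ∘ g = Subtype.val := funext hg
  rw [← Function.comp_assoc, hcomp]
  exact Subtype.val_injective.comp T.equivFin.symm.injective

section Configurations

variable {k p m n m' n' q : ℕ}

theorem RMat.submatrix {A : MatN m n} (hA : RMat q A) (f : Fin m' → Fin m) (g : Fin n' → Fin n) :
    RMat q (A.submatrix f g) :=
  fun i j => hA (f i) (g j)

theorem SimpleM.submatrix_cols {A : MatN m n} (hA : SimpleM A) {g : Fin n' → Fin n}
    (hg : Function.Injective g) : SimpleM (A.submatrix id g) :=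
  fun _ _ h => hg (hA _ _ h)

theorem SimpleM.card_le {A : MatN m n} (hs : SimpleM A) (hA : RMat q A) : n ≤ q ^ m := by
  have hinj : Function.Injective fun (j : Fin n) (i : Fin m) => (⟨A i j, hA i j⟩ : Fin q) :=
    fun j₁ j₂ h => hs j₁ j₂ fun i => congrArg Fin.val (congrFun h i)
  simpa using Fintype.card_le_of_injective _ hinj

theorem IsConfig.trans {k' p' : ℕ} {F : MatN k p} {G : MatN k' p'} {A : MatN m n}
    (hFG : IsConfig F G) (hGA : IsConfig G A) : IsConfig F A := by
  obtain ⟨φ, γ, hφ, hγ, hF⟩ := hFG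
  obtain ⟨f, g, hf, hg, hG⟩ := hGA
  exact ⟨f ∘ φ, g ∘ γ, hf.comp hφ, hg.comp hγ, fun i j => (hG _ _).trans (hF i j)⟩

theorem isConfig_submatrix (A : MatN m n) {f : Fin m' → Fin m} {g : Fin n' → Fin n}
    (hf : Function.Injective f) (hg : Function.Injective g) : IsConfig (A.submatrix f g) A :=
  ⟨f, g, hf, hg, fun _ _ => rfl⟩

theorem AvoidsFam.submatrix {A : MatN m n} {𝓕 : Set CMat} (hA : AvoidsFam A 𝓕)
    {f : Fin m' → Fin m} {g : Fin n' → Fin n} (hf : Function.Injective f)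
    (hg : Function.Injective g) : AvoidsFam (A.submatrix f g) 𝓕 :=
  fun F hF h => hA F hF (h.trans (isConfig_submatrix A hf hg))

theorem IsConfig.of_submatrix_eq {F : MatN k p} (hrow : Function.Injective F) (hcol : SimpleM F)
    {A : MatN m n} {f : Fin k → Fin m} {g : Fin p → Fin n} (h : A.submatrix f g = F) :
    IsConfig F A := by
  refine ⟨f, g, fun i₁ i₂ hi => hrow ?_, fun j₁ j₂ hj => hcol _ _ fun i => ?_,
    fun i j => congrFun₂ h i j⟩
  · funext j
    simp only [← h, Matrix.submatrix_apply, hi]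
  · simp only [← h, Matrix.submatrix_apply, hj]

theorem isConfig_of_forall_le_card {F : MatN k p} {A : MatN m n} {g : Fin p → Fin n}
    (hg : Function.Injective g)
    (h : ∀ i, k ≤ #{x : Fin m | ∀ j, A x (g j) = F i j}) : IsConfig F A := by
  let rows (i : Fin k) : Finset (Fin m) := {x | ∀ j, A x (g j) = F i j}
  have hall (s : Finset (Fin k)) : #s ≤ #(s.biUnion rows) := by
    rcases s.eq_empty_or_nonempty with rfl | ⟨i, hi⟩
    · exact Nat.zero_le _
    · calc
        #s ≤ k := by simpa using s.card_le_univ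
        _ ≤ #(rows i) := h i
        _ ≤ #(s.biUnion rows) := Finset.card_le_card (Finset.subset_biUnion_of_mem rows hi)
  obtain ⟨f, hf, hfrows⟩ := (Finset.all_card_le_biUnion_card_iff_exists_injective rows).1 hall
  exact ⟨f, g, hf, hg, fun i => (Finset.mem_filter.1 (hfrows i)).2⟩

end Configurations

section UnavoidableMatrices

variable {ℓ a b r s : ℕ}

theorem Imat_injective (hab : a ≠ b) : Function.Injective (Imat ℓ a b) := by
  intro i₁ i₂ h
  by_contra hne
  exact hab (by simpa [Imat, Ne.symm hne] using congrFun h i₁)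

theorem simpleM_Imat (hab : a ≠ b) : SimpleM (Imat ℓ a b) := by
  intro j₁ j₂ h
  by_contra hne
  exact hab (by simpa [Imat, hne] using h j₁)

theorem Tmat_injective (hab : a ≠ b) : Function.Injective (Tmat ℓ a b) := by
  refine .of_lt_imp_ne fun i₁ i₂ hi h => hab ?_
  simpa [Tmat, hi] using (congrFun h i₁).symm

theorem simpleM_Tmat (hab : a ≠ b) : SimpleM (Tmat ℓ a b) := by
  have hinj : Function.Injective (Tmat ℓ a b).transpose := by
    refine .of_lt_imp_ne fun j₁ j₂ hj h => hab ?_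
    simpa [Tmat, Matrix.transpose, hj] using congrFun h j₂
  exact fun _ _ h => hinj (funext h)

/-- Reversing the order of the rows and of the columns turns `≤` into `≥`; dropping the first row
and the last column turns that into the strict inequality. -/
theorem isConfig_Tmat_swap (P : ℕ) (hab : a ≠ b) : IsConfig (Tmat P b a) (Tmat (P + 1) a b) := by
  refine .of_submatrix_eq (Tmat_injective hab.symm) (simpleM_Tmat hab.symm)
    (f := fun i => i.rev.succ) (g := fun j => j.rev.castSucc) ?_
  ext i j
  simp only [Tmat, Matrix.submatrix_apply, Fin.val_succ, Fin.val_castSucc, Fin.val_rev]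
  split_ifs <;> omega

theorem RMat.of_mem_TFam {M : MatN ℓ ℓ} (hM : ⟨ℓ, ℓ, M⟩ ∈ TFam ℓ s) : RMat s M := by
  obtain ⟨a, b, ha, hb, -, h | h⟩ := hM <;> cases h <;> intro i j
  · unfold Imat; split_ifs <;> assumption
  · unfold Tmat; split_ifs <;> assumption

theorem Imat_mem_TFam_diff (hℓ : 2 ≤ ℓ) (ha : a < r) (hb : b < r) (hab : a ≠ b)
    (hs : s ≤ a ∨ s ≤ b) : (⟨ℓ, ℓ, Imat ℓ a b⟩ : CMat) ∈ TFam ℓ r \ TFam ℓ s := by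
  refine ⟨⟨a, b, ha, hb, hab, Or.inl rfl⟩, fun h => ?_⟩
  have hdiag := RMat.of_mem_TFam h ⟨0, by omega⟩ ⟨0, by omega⟩
  have hoff := RMat.of_mem_TFam h ⟨0, by omega⟩ ⟨1, by omega⟩
  simp only [Imat, ↓reduceIte, Fin.mk.injEq, zero_ne_one] at hdiag hoff
  omega

theorem Tmat_mem_TFam_diff (hℓ : 2 ≤ ℓ) (ha : a < r) (hb : b < r) (hab : a ≠ b)
    (hs : s ≤ a ∨ s ≤ b) : (⟨ℓ, ℓ, Tmat ℓ a b⟩ : CMat) ∈ TFam ℓ r \ TFam ℓ s := by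
  refine ⟨⟨a, b, ha, hb, hab, Or.inr rfl⟩, fun h => ?_⟩
  have hdiag := RMat.of_mem_TFam h ⟨0, by omega⟩ ⟨0, by omega⟩
  have hbelow := RMat.of_mem_TFam h ⟨1, by omega⟩ ⟨0, by omega⟩
  simp only [Tmat, lt_self_iff_false, ↓reduceIte, Order.lt_one_iff] at hdiag hbelow
  omega

end UnavoidableMatrices

/-- The row `b` reads `w ⋯ w α u ⋯ u β y ⋯ y`, with `α` in column `i` and `β` in column `j`. -/
structure IsProfile {M : ℕ} (b : Fin M → ℕ) (i j : Fin M) (w α u β y : ℕ) : Prop where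
  before : ∀ k < i, b k = w
  left : b i = α
  between : ∀ k, i < k → k < j → b k = u
  right : b j = β
  after : ∀ k, j < k → b k = y

/-- For every pair of columns, `B` has a row distinguishing the pair, and the shape of that row does
not depend on the pair. Ramsey's theorem reduces every choice of rows for the pairs of columns of a
matrix to this situation. -/
def HomogeneousRows {m M : ℕ} (B : MatN m M) (w α u β y : ℕ) : Prop :=
  ∀ i j, i < j → ∃ x, IsProfile (B x) i j w α u β y

theorem exists_homogeneousRows (q M : ℕ) (hM : 2 ≤ M) [NeZero q] :
    ∃ n : ℕ, ∀ {m : ℕ} {A : MatN m n}, RMat q A → ∀ R : ℕ → ℕ → Prop,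
      (∀ i j, i < j → ∃ x, R (A x i) (A x j)) →
      ∃ (g : Fin M ↪o Fin n) (w α u β y : Fin q),
        R α β ∧ HomogeneousRows (A.submatrix id g) w α u β y := by
  obtain ⟨n, hn⟩ := exists_orderEmb_forall_eq (Fin q × Fin q × Fin q × Fin q × Fin q) (M + 1)
  refine ⟨n, fun {m A} hA R hR => ?_⟩
  let i₀ : Fin M := ⟨0, by omega⟩
  let i₁ : Fin M := ⟨1, by omega⟩
  have h₀₁ : i₀ < i₁ := Fin.mk_lt_mk.2 Nat.zero_lt_one
  have : Nonempty (Fin m) := by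
    obtain ⟨g, -⟩ := hn fun _ _ _ => 0
    exact (hR _ _ (g.strictMono (Fin.castSucc_lt_castSucc_iff.2 h₀₁))).nonempty
  choose! ρ hρ using hR
  let e (x : Fin m) (i : Fin n) : Fin q := ⟨A x i, hA x i⟩
  obtain ⟨g, ⟨w, α, u, β, y⟩, hg⟩ := hn fun i j k =>
    (e (ρ j k) i, e (ρ i j) i, e (ρ i k) j, e (ρ i j) j, e (ρ i j) k)
  simp only [Prod.mk.injEq, Fin.ext_iff, e] at hg
  have hprof (i j : Fin M) (hij : i < j) : IsProfile
      (A.submatrix id (Fin.castSuccOrderEmb.trans g) (ρ (g i.castSucc) (g j.castSucc)))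
      i j w α u β y :=
    -- The extra column `Fin.last M` completes the pair `i < j` to a triple.
    { before := fun k hk => (hg _ _ _ hk hij).1
      left := (hg _ _ _ hij j.castSucc_lt_last).2.1
      between := fun k hik hkj => (hg _ _ _ hik hkj).2.2.1
      right := (hg _ _ _ hij j.castSucc_lt_last).2.2.2.1
      after := fun k hk => (hg _ _ _ hij hk).2.2.2.2 }
  refine ⟨Fin.castSuccOrderEmb.trans g, w, α, u, β, y, ?_, fun i j hij => ⟨_, hprof i j hij⟩⟩
  rw [← (hprof i₀ i₁ h₀₁).left, ← (hprof i₀ i₁ h₀₁).right]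
  exact hρ _ _ (g.strictMono (Fin.castSucc_lt_castSucc_iff.2 h₀₁))

/-- The rows of `A` having the entries `a` and `b` in the columns `s` and `t`. -/
def pairRows {m n : ℕ} (A : MatN m n) (s t : Fin n) (a b : ℕ) : Finset (Fin m) :=
  {x | A x s = a ∧ A x t = b}

theorem mem_pairRows {m n a b : ℕ} {A : MatN m n} {s t : Fin n} {x : Fin m} :
    x ∈ pairRows A s t a b ↔ A x s = a ∧ A x t = b := by
  simp [pairRows]

theorem le_card_pairRows {m n P a b : ℕ} {A : MatN m n} {s t : Fin n} {x : Fin P → Fin m}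
    (hx : Function.Injective x) (h : ∀ i, A (x i) s = a ∧ A (x i) t = b) :
    P ≤ #(pairRows A s t a b) := by
  calc
    P = #(Finset.univ.map ⟨x, hx⟩) := by simp
    _ ≤ #(pairRows A s t a b) := Finset.card_le_card fun z hz => by
      obtain ⟨i, -, rfl⟩ := Finset.mem_map.1 hz
      exact mem_pairRows.2 (h i)

namespace HomogeneousRows

variable {m M P w α u β y : ℕ} {B : MatN m M}

theorem isConfig_Tmat (h : HomogeneousRows B w α u β y) (hwy : w ≠ y) (hP : 3 * P ≤ M) :
    IsConfig (Tmat P w y) B := by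
  choose x hx using fun i : Fin P =>
    h ⟨3 * i, by omega⟩ ⟨3 * i + 1, by omega⟩ (Fin.mk_lt_mk.2 (by omega))
  refine .of_submatrix_eq (Tmat_injective hwy) (simpleM_Tmat hwy)
    (f := x) (g := fun j => ⟨3 * j + 2, by omega⟩) ?_
  ext i j
  simp only [Matrix.submatrix_apply, Tmat]
  split_ifs with hji
  · exact (hx i).before _ (Fin.mk_lt_mk.2 (by omega))
  · exact (hx i).after _ (Fin.mk_lt_mk.2 (by omega))

theorem isConfig_Imat {γ : ℕ} (h : HomogeneousRows B w α u β w) (hγ : γ = α ∨ γ = β)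
    (hγw : γ ≠ w) (hP : 2 * P ≤ M) : IsConfig (Imat P γ w) B := by
  choose x hx using fun i : Fin P =>
    h ⟨2 * i, by omega⟩ ⟨2 * i + 1, by omega⟩ (Fin.mk_lt_mk.2 (by omega))
  obtain ⟨d, hd, hdiag⟩ : ∃ (d : ℕ) (hd : d < 2), ∀ i : Fin P,
      B (x i) ⟨2 * i + d, by omega⟩ = γ := by
    rcases hγ with rfl | rfl
    · exact ⟨0, by omega, fun i => (hx i).left⟩
    · exact ⟨1, by omega, fun i => (hx i).right⟩
  refine .of_submatrix_eq (Imat_injective hγw) (simpleM_Imat hγw)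
    (f := x) (g := fun j => ⟨2 * j + d, by omega⟩) ?_
  ext i j
  simp only [Matrix.submatrix_apply, Imat]
  split_ifs with hij
  · exact hij ▸ hdiag i
  · rcases lt_or_gt_of_ne hij with hij | hij
    · exact (hx i).after _ (Fin.mk_lt_mk.2 (by omega))
    · exact (hx i).before _ (Fin.mk_lt_mk.2 (by omega))

theorem isConfig_Tmat_between (h : HomogeneousRows B w α u β y) (huy : u ≠ y)
    (hP : 2 * P + 1 ≤ M) : IsConfig (Tmat P u y) B := by
  choose x hx using fun i : Fin P =>
    h ⟨0, by omega⟩ ⟨2 * i + 1, by omega⟩ (Fin.mk_lt_mk.2 (by omega))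
  refine .of_submatrix_eq (Tmat_injective huy) (simpleM_Tmat huy)
    (f := x) (g := fun j => ⟨2 * j + 2, by omega⟩) ?_
  ext i j
  simp only [Matrix.submatrix_apply, Tmat]
  split_ifs with hji
  · exact (hx i).between _ (Fin.mk_lt_mk.2 (by omega)) (Fin.mk_lt_mk.2 (by omega))
  · exact (hx i).after _ (Fin.mk_lt_mk.2 (by omega))

theorem isConfig_Imat_between (h : HomogeneousRows B w α y β y) (hβy : β ≠ y)
    (hP : P + 1 ≤ M) : IsConfig (Imat P β y) B := by
  choose x hx using fun i : Fin P =>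
    h ⟨0, by omega⟩ ⟨i + 1, by omega⟩ (Fin.mk_lt_mk.2 (by omega))
  refine .of_submatrix_eq (Imat_injective hβy) (simpleM_Imat hβy)
    (f := x) (g := fun j => ⟨j + 1, by omega⟩) ?_
  ext i j
  simp only [Matrix.submatrix_apply, Imat]
  split_ifs with hij
  · exact hij ▸ (hx i).right
  · rcases lt_or_gt_of_ne hij with hij | hij
    · exact (hx i).after _ (Fin.mk_lt_mk.2 (by omega))
    · exact (hx i).between _ (Fin.mk_lt_mk.2 (by omega)) (Fin.mk_lt_mk.2 (by omega))

theorem exists_le_card_pairRows_left (h : HomogeneousRows B w α u β y) (huβ : u ≠ β)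
    (hP : P + 2 ≤ M) : ∃ s t, s < t ∧ P ≤ #(pairRows B s t α u) := by
  choose x hx using fun i : Fin P =>
    h ⟨0, by omega⟩ ⟨i + 2, by omega⟩ (Fin.mk_lt_mk.2 (by omega))
  refine ⟨⟨0, by omega⟩, ⟨1, by omega⟩, Fin.mk_lt_mk.2 Nat.zero_lt_one,
    le_card_pairRows (x := x) (.of_lt_imp_ne fun i j hij heq => huβ ?_) fun i =>
      ⟨(hx i).left, (hx i).between _ (Fin.mk_lt_mk.2 (by omega)) (Fin.mk_lt_mk.2 (by omega))⟩⟩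
  rw [← (hx j).between ⟨i + 2, by omega⟩ (Fin.mk_lt_mk.2 (by omega)) (Fin.mk_lt_mk.2 (by omega)),
    ← heq, (hx i).right]

theorem exists_le_card_pairRows_ends (h : HomogeneousRows B w α u β y) (hyβ : y ≠ β)
    (hP : P + 3 ≤ M) : ∃ s t, s < t ∧ P ≤ #(pairRows B s t w y) := by
  choose x hx using fun i : Fin P =>
    h ⟨i + 1, by omega⟩ ⟨i + 2, by omega⟩ (Fin.mk_lt_mk.2 (by omega))
  refine ⟨⟨0, by omega⟩, ⟨P + 2, by omega⟩, Fin.mk_lt_mk.2 (by omega),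
    le_card_pairRows (x := x) (.of_lt_imp_ne fun i j hij heq => hyβ ?_) fun i =>
      ⟨(hx i).before _ (Fin.mk_lt_mk.2 (by omega)), (hx i).after _ (Fin.mk_lt_mk.2 (by omega))⟩⟩
  rw [← (hx i).after ⟨j + 2, by omega⟩ (Fin.mk_lt_mk.2 (by omega)), heq, (hx j).right]

end HomogeneousRows

section TwoSupport

variable {ℓ m n M : ℕ}

/-- The rows in which column `j` of `A` has the entry `a`; for `a = 2` this is the part of a column
of a 3-matrix on which it differs from a (0,1)-column. -/
def support (A : MatN m n) (a : ℕ) (j : Fin n) : Finset (Fin m) := {i | A i j = a}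

theorem HomogeneousRows.zero_one_or_one_zero {B : MatN m M} {w α u β y : Fin 3}
    (h : HomogeneousRows B w α u β y) (hℓ : 2 ≤ ℓ) (hB : AvoidsFam B (TFam ℓ 3 \ TFam ℓ 2))
    (hM : 3 * ℓ ≤ M) (hαβ : ¬((α : ℕ) = 2 ↔ (β : ℕ) = 2)) :
    ((w : ℕ) = 0 ∧ (y : ℕ) = 1) ∨ ((w : ℕ) = 1 ∧ (y : ℕ) = 0) := by
  have hwy : (w : ℕ) ≠ y := by
    intro hwy
    obtain ⟨γ, hγ, hγw, hγ2⟩ : ∃ γ : Fin 3, ((γ : ℕ) = α ∨ (γ : ℕ) = β) ∧ (γ : ℕ) ≠ w ∧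
        (2 ≤ (γ : ℕ) ∨ 2 ≤ (w : ℕ)) := by
      by_cases hα : (α : ℕ) = 2 <;> by_cases hw : (w : ℕ) = 2
      · exact ⟨β, by omega⟩
      · exact ⟨α, by omega⟩
      · exact ⟨α, by omega⟩
      · exact ⟨β, by omega⟩
    rw [← hwy] at h
    exact hB _ (Imat_mem_TFam_diff hℓ γ.isLt w.isLt hγw hγ2)
      (h.isConfig_Imat (P := ℓ) hγ hγw (by omega))
  have hlt : ¬(2 ≤ (w : ℕ) ∨ 2 ≤ (y : ℕ)) := fun h2 =>
    hB _ (Tmat_mem_TFam_diff hℓ w.isLt y.isLt hwy h2) (h.isConfig_Tmat hwy hM)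
  omega

theorem exists_isConfig_Tmat (hℓ : 2 ≤ ℓ) (P : ℕ) :
    ∃ n : ℕ, ∀ {m : ℕ} {A : MatN m n}, RMat 3 A → AvoidsFam A (TFam ℓ 3 \ TFam ℓ 2) →
      Function.Injective (support A 2) → IsConfig (Tmat P 0 1) A := by
  obtain ⟨n, hn⟩ := exists_homogeneousRows 3 (3 * (ℓ + P + 1)) (by omega)
  refine ⟨n, fun {m A} hA hAF hinj => ?_⟩
  have hrow (i j : Fin n) (hij : i < j) : ∃ x, ¬(A x i = 2 ↔ A x j = 2) := by
    by_contra! heq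
    exact hij.ne (hinj (Finset.filter_congr fun x _ => heq x))
  obtain ⟨g, w, α, u, β, y, hαβ, h⟩ := hn hA (fun a b => ¬(a = 2 ↔ b = 2)) hrow
  have hconfig {Q : ℕ} (hwy : (w : ℕ) ≠ y) (hQ : Q ≤ P + 1) : IsConfig (Tmat Q w y) A :=
    (h.isConfig_Tmat hwy (by omega)).trans
      (isConfig_submatrix A Function.injective_id g.injective)
  rcases h.zero_one_or_one_zero hℓ (hAF.submatrix Function.injective_id g.injective) (by omega) hαβ
    with ⟨hw, hy⟩ | ⟨hw, hy⟩ <;> rw [hw, hy] at hconfig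
  · exact hconfig Nat.zero_ne_one P.le_succ
  · exact (isConfig_Tmat_swap P Nat.one_ne_zero).trans (hconfig Nat.one_ne_zero le_rfl)

end TwoSupport

section PairRows

variable {m n M P q a b : ℕ} {A : MatN m n} {s t : Fin n}

theorem card_pairRows_le_card_pairRows {B : MatN P M} {f : Fin P → Fin m} {g : Fin M → Fin n}
    (hf : Function.Injective f) (h : ∀ i j, A (f i) (g j) = B i j) (s t : Fin M) (a b : ℕ) :
    #(pairRows B s t a b) ≤ #(pairRows A (g s) (g t) a b) :=
  Finset.card_le_card_of_injOn f (fun i hi => by simpa [pairRows, h] using hi) hf.injOn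

theorem pairRows_Tmat_eq_Iic (hab : a ≠ b) {s t : Fin P} (hst : s ≤ t) :
    pairRows (Tmat P a b) s t b b = Finset.Iic s := by
  ext i
  have : (s : ℕ) ≤ t := hst
  simp only [mem_pairRows, Tmat, Finset.mem_Iic, Fin.le_def]
  grind

theorem pairRows_Tmat_eq_Ioc (hab : a ≠ b) {s t : Fin P} :
    pairRows (Tmat P a b) s t a b = Finset.Ioc s t := by
  ext i
  simp only [mem_pairRows, Tmat, Finset.mem_Ioc, Fin.le_def, Fin.lt_def]
  grind

theorem pairRows_Tmat_eq_Ioi (hab : a ≠ b) {s t : Fin P} (hst : s ≤ t) :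
    pairRows (Tmat P a b) s t a a = Finset.Ioi t := by
  ext i
  have : (s : ℕ) ≤ t := hst
  simp only [mem_pairRows, Tmat, Finset.mem_Ioi, Fin.lt_def]
  grind

/-- The columns `c` are those at the positions `K, 2K, …, MK` of the triangular matrix. -/
theorem IsConfig.exists_le_card_pairRows {K : ℕ} (hab : a ≠ b) (hK : 0 < K)
    (h : IsConfig (Tmat ((M + 1) * K + 1) a b) A) :
    ∃ c : Fin M → Fin n, Function.Injective c ∧ ∀ s t, s < t →
      K ≤ #(pairRows A (c s) (c t) b b) ∧ K ≤ #(pairRows A (c s) (c t) a b) ∧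
        K ≤ #(pairRows A (c s) (c t) a a) := by
  obtain ⟨f, g, hf, hg, hA⟩ := h
  have hle (j : Fin M) : (j + 1 : ℕ) * K ≤ M * K := Nat.mul_le_mul_right K j.isLt
  let d (j : Fin M) : Fin ((M + 1) * K + 1) :=
    ⟨(j + 1) * K, by have := hle j; rw [Nat.add_mul M]; omega⟩
  have hgap {s t : Fin M} (hst : s < t) : (d s : ℕ) + K ≤ d t := by
    have : (s + 1 + 1 : ℕ) * K ≤ (t + 1) * K := Nat.mul_le_mul_right K (by omega)
    rwa [Nat.add_mul (s + 1), Nat.one_mul] at this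
  have hd : StrictMono d := fun s t hst => Fin.lt_def.2 (by have := hgap hst; omega)
  refine ⟨g ∘ d, hg.comp hd.injective, fun s t hst => ?_⟩
  have hcount (a' b' : ℕ) := card_pairRows_le_card_pairRows hf hA (d s) (d t) a' b'
  refine ⟨le_trans ?_ (hcount b b), le_trans ?_ (hcount a b), le_trans ?_ (hcount a a)⟩
  · rw [pairRows_Tmat_eq_Iic hab (hd hst).le, Fin.card_Iic]
    have : 1 * K ≤ (s + 1) * K := Nat.mul_le_mul_right K (by omega)
    simp only [d]
    omega
  · rw [pairRows_Tmat_eq_Ioc hab, Fin.card_Ioc]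
    have := hgap hst
    omega
  · rw [pairRows_Tmat_eq_Ioi hab (hd hst).le, Fin.card_Ioi]
    have := hle t
    simp only [d, Nat.add_mul M]
    omega

theorem isConfig_of_le_card_pairRows {r : ℕ} {F : MatN r 2} (hF : RMat q F) (hst : s ≠ t)
    (h : ∀ a < q, ∀ b < q, r ≤ #(pairRows A s t a b)) : IsConfig F A := by
  refine isConfig_of_forall_le_card (g := ![s, t]) ?_ fun i => ?_
  · simpa [Function.Injective, Fin.forall_fin_two, eq_comm] using hst
  · simpa [pairRows, Fin.forall_fin_two] using h _ (hF i 0) _ (hF i 1)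

theorem pairRows_swap (A : MatN m n) (s t : Fin n) (a b : ℕ) :
    pairRows A t s b a = pairRows A s t a b :=
  Finset.filter_congr fun _ _ => and_comm

theorem colSum_eq_sum_pairRows (hA : RMat q A) (s t : Fin n) :
    colSum A s = ∑ b ∈ Finset.range q, #(pairRows A s t 1 b) := by
  unfold colSum
  rw [Finset.card_eq_sum_card_fiberwise (f := fun i => A i t)
    fun i _ => Finset.mem_coe.2 (Finset.mem_range.2 (hA i t))]
  simp only [pairRows, Finset.filter_filter]

/-- In equal column sums the rows `11` cancel, so a surplus of rows `01` over rows `10` must be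
compensated by rows `12`. -/
theorem exists_eq_one_and_eq_two (hA : RMat 3 A) (hsum : colSum A s = colSum A t)
    (hlt : #(pairRows A s t 1 0) < #(pairRows A s t 0 1)) : ∃ x, A x s = 1 ∧ A x t = 2 := by
  rw [colSum_eq_sum_pairRows hA s t, colSum_eq_sum_pairRows hA t s] at hsum
  simp only [Finset.sum_range_succ, Finset.sum_range_zero, pairRows_swap A s t] at hsum
  obtain ⟨x, hx⟩ : (pairRows A s t 1 2).Nonempty := Finset.card_pos.1 (by omega)
  exact ⟨x, mem_pairRows.1 hx⟩

end PairRows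

section TwoColumns

variable {ℓ : ℕ}

theorem exists_le_card_pairRows_one_zero (hℓ : 2 ≤ ℓ) (r : ℕ) :
    ∃ n : ℕ, ∀ {m : ℕ} {A : MatN m n}, RMat 3 A → AvoidsFam A (TFam ℓ 3 \ TFam ℓ 2) →
      (∀ i j, i < j → ∃ x, A x i = 1 ∧ A x j = 2) →
      ∃ s t, s < t ∧ r ≤ #(pairRows A s t 1 0) := by
  obtain ⟨n, hn⟩ := exists_homogeneousRows 3 (3 * ℓ + r + 3) (by omega)
  refine ⟨n, fun {m A} hA hAF h12 => ?_⟩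
  obtain ⟨g, w, α, u, β, y, ⟨hα, hβ⟩, h⟩ := hn hA (fun a b => a = 1 ∧ b = 2) h12
  set B := A.submatrix id g
  have hB : AvoidsFam B (TFam ℓ 3 \ TFam ℓ 2) :=
    hAF.submatrix Function.injective_id g.injective
  suffices hBr : ∃ s t, s < t ∧ r ≤ #(pairRows B s t 1 0) by
    obtain ⟨s, t, hst, hr⟩ := hBr
    exact ⟨g s, g t, g.strictMono hst, hr⟩
  have hwy := h.zero_one_or_one_zero hℓ hB (by omega) (by omega)
  rw [hα, hβ] at h
  rcases hwy with ⟨hw, hy⟩ | ⟨hw, hy⟩ <;> rw [hw, hy] at h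
  · obtain hu | hu | hu : (u : ℕ) = 0 ∨ (u : ℕ) = 1 ∨ (u : ℕ) = 2 := by omega
    all_goals rw [hu] at h
    · exact h.exists_le_card_pairRows_left (by decide) (by omega)
    · exact absurd (h.isConfig_Imat_between (P := ℓ) (by decide) (by omega))
        (hB _ (Imat_mem_TFam_diff hℓ (by decide) (by decide) (by decide) (by decide)))
    · exact absurd (h.isConfig_Tmat_between (P := ℓ) (by decide) (by omega))
        (hB _ (Tmat_mem_TFam_diff hℓ (by decide) (by decide) (by decide) (by decide)))
  · exact h.exists_le_card_pairRows_ends (by decide) (by omega)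

theorem exists_isConfig_of_injective_support (hℓ : 2 ≤ ℓ) {r : ℕ} {F : MatN r 2}
    (hF : RMat 2 F) :
    ∃ n : ℕ, ∀ {m : ℕ} {A : MatN m n}, RMat 3 A → AvoidsFam A (TFam ℓ 3 \ TFam ℓ 2) →
      Function.Injective (support A 2) → (∀ s t, colSum A s = colSum A t) → IsConfig F A := by
  obtain ⟨M, hM⟩ := exists_le_card_pairRows_one_zero hℓ r
  obtain ⟨n, hn⟩ := exists_isConfig_Tmat hℓ ((M + 1) * (r + 1) + 1)
  refine ⟨n, fun {m A} hA hAF hinj hsum => ?_⟩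
  obtain ⟨c, hc, hcard⟩ :=
    (hn hA hAF hinj).exists_le_card_pairRows Nat.zero_ne_one r.succ_pos
  obtain ⟨s, t, hst, h10⟩ : ∃ s t, s < t ∧ r ≤ #(pairRows A (c s) (c t) 1 0) := by
    by_contra! hfew
    obtain ⟨s, t, hst, hr⟩ := hM (hA.submatrix id c) (hAF.submatrix Function.injective_id hc)
      fun s t hst => exists_eq_one_and_eq_two (hA.submatrix id c) (hsum _ _)
        ((hfew s t hst).trans (hcard s t hst).2.1)
    exact (hfew s t hst).not_ge hr
  obtain ⟨h11, h01, h00⟩ := hcard s t hst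
  refine isConfig_of_le_card_pairRows hF (hc.ne hst.ne) fun a ha b hb => ?_
  interval_cases a <;> interval_cases b
  · exact (Nat.le_succ r).trans h00
  · exact (Nat.le_succ r).trans h01
  · exact h10
  · exact (Nat.le_succ r).trans h11

end TwoColumns

section Counting

variable {k m n q : ℕ} {𝓕 : Set CMat}

theorem le_forbK {A : MatN m n} (hA : RMat q A) (hs : SimpleM A) (hk : ∀ j, colSum A j = k)
    (hF : AvoidsFam A 𝓕) : n ≤ forbK k m q 𝓕 :=
  le_csSup ⟨q ^ m, fun _ ⟨_, hB, hBs, _⟩ => hBs.card_le hB⟩ ⟨A, hA, hs, hk, hF⟩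

theorem forbK_le_forbmaxK {m' : ℕ} (h : m' ≤ m) : forbK k m' q 𝓕 ≤ forbmaxK k m q 𝓕 := by
  refine le_csSup (Set.Finite.bddAbove ?_) ⟨m', h, rfl⟩
  refine ((Set.finite_Iic m).image fun m' => forbK k m' q 𝓕).subset ?_
  rintro _ ⟨m', hm', rfl⟩
  exact ⟨m', hm', rfl⟩

theorem colSum_submatrix_rows {m' : ℕ} {A : MatN m n} {f : Fin m' → Fin m}
    (hf : Function.Injective f) {j : Fin n} (h : ∀ i, A i j = 1 → ∃ i', f i' = i) :
    colSum (A.submatrix f id) j = colSum A j := by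
  refine Finset.card_nbij f (fun i hi => ?_) hf.injOn fun i hi => ?_
  · exact (Finset.mem_filter_univ _).2 ((Finset.mem_filter_univ i).1 hi)
  · obtain ⟨i', rfl⟩ := h i (by simpa using hi)
    exact ⟨i', Finset.mem_coe.2 ((Finset.mem_filter_univ _).2 (by simpa using hi)), rfl⟩

/-- The rows carrying the symbol `q` are common to all columns, so deleting them leaves a simple
`q`-matrix; no entry `1` is lost. -/
theorem le_forbmaxK_of_support_eq {A : MatN m n} (hq : q ≠ 1) (hA : RMat (q + 1) A)
    (hs : SimpleM A) (hk : ∀ j, colSum A j = k) (hF : AvoidsFam A 𝓕) {S : Finset (Fin m)}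
    (hS : ∀ j, support A q j = S) : n ≤ forbmaxK k m q 𝓕 := by
  have hmem (i : Fin m) (j : Fin n) : i ∈ S ↔ A i j = q := by simp [← hS j, support]
  let f : Fin #Sᶜ ↪o Fin m := Sᶜ.orderEmbOfFin rfl
  have hfS (i : Fin #Sᶜ) : f i ∉ S := Finset.mem_compl.1 (Sᶜ.orderEmbOfFin_mem rfl i)
  have hf (i : Fin m) (hi : i ∉ S) : ∃ i', f i' = i := by
    have : i ∈ Set.range f := by simpa [f] using hi
    exact this
  have hB : RMat q (A.submatrix f id) := fun i j =>
    (Nat.lt_succ_iff.1 (hA (f i) j)).lt_of_ne fun h => hfS i ((hmem _ j).2 h)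
  have hBs : SimpleM (A.submatrix f id) := by
    refine fun j₁ j₂ h => hs j₁ j₂ fun i => ?_
    by_cases hi : i ∈ S
    · rw [(hmem i j₁).1 hi, (hmem i j₂).1 hi]
    · obtain ⟨i', rfl⟩ := hf i hi
      exact h i'
  have hBk (j : Fin n) : colSum (A.submatrix f id) j = k := by
    rw [← hk j]
    refine colSum_submatrix_rows f.injective (fun i hi => hf i fun hiS => hq ?_)
    exact ((hmem i j).1 hiS).symm.trans hi
  exact (le_forbK hB hBs hBk (hF.submatrix f.injective Function.injective_id)).trans
    (forbK_le_forbmaxK (by simpa using Sᶜ.card_le_univ))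

theorem forb_le_sum_forbK : forb m q 𝓕 ≤ ∑ k ∈ Finset.range (m + 1), forbK k m q 𝓕 := by
  refine csSup_le' fun n ⟨A, hA, hs, hF⟩ => ?_
  have hle (j : Fin n) : colSum A j < m + 1 :=
    Nat.lt_succ_of_le ((Finset.card_le_univ _).trans_eq (Fintype.card_fin m))
  calc
    n = ∑ k ∈ Finset.range (m + 1), #{j | colSum A j = k} := by
      rw [← Finset.card_eq_sum_card_fiberwise fun j _ => Finset.mem_coe.2 (by simpa using hle j)]
      simp
    _ ≤ ∑ k ∈ Finset.range (m + 1), forbK k m q 𝓕 := Finset.sum_le_sum fun k _ => by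
      let g := Finset.orderEmbOfFin {j | colSum A j = k} rfl
      have hg (j) : colSum A (g j) = k := (Finset.mem_filter.1 (Finset.orderEmbOfFin_mem _ rfl j)).2
      exact le_forbK (hA.submatrix id g) (hs.submatrix_cols g.injective) hg
        (hF.submatrix Function.injective_id g.injective)

theorem exists_forbK_le_mul_forbmaxK {ℓ r : ℕ} (hℓ : 2 ≤ ℓ) {F : MatN r 2} (hF : RMat 2 F) :
    ∃ c : ℕ, ∀ k m : ℕ, forbK k m 3 ((TFam ℓ 3 \ TFam ℓ 2) ∪ {⟨r, 2, F⟩}) ≤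
      c * forbmaxK k m 2 {⟨r, 2, F⟩} := by
  obtain ⟨N, hN⟩ := exists_isConfig_of_injective_support hℓ hF
  refine ⟨N, fun k m => csSup_le' fun n ⟨A, hA, hs, hk, hAF⟩ => ?_⟩
  have hT : AvoidsFam A (TFam ℓ 3 \ TFam ℓ 2) := fun G hG => hAF G (Or.inl hG)
  have hFA : AvoidsFam A {⟨r, 2, F⟩} := fun G hG => hAF G (Or.inr hG)
  have himage : #(Finset.univ.image (support A 2)) ≤ N := by
    by_contra! hlt
    obtain ⟨g, hg⟩ := exists_injective_comp_of_le_card_image hlt.le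
    have hconfig : IsConfig F (A.submatrix id g) :=
      hN (hA.submatrix id g) (hT.submatrix Function.injective_id hg.of_comp) hg
        fun s t => (hk (g s)).trans (hk (g t)).symm
    exact hFA _ rfl (hconfig.trans (isConfig_submatrix A Function.injective_id hg.of_comp))
  have hfiber (S : Finset (Fin m)) : #{j | support A 2 j = S} ≤ forbmaxK k m 2 {⟨r, 2, F⟩} := by
    let g := Finset.orderEmbOfFin {j | support A 2 j = S} rfl
    exact le_forbmaxK_of_support_eq (by decide) (hA.submatrix id g) (hs.submatrix_cols g.injective)
      (fun j => hk (g j)) (hFA.submatrix Function.injective_id g.injective)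
      fun j => (Finset.mem_filter.1 (Finset.orderEmbOfFin_mem _ rfl j)).2
  calc
    n = #(Finset.univ : Finset (Fin n)) := (Finset.card_fin n).symm
    _ ≤ forbmaxK k m 2 {⟨r, 2, F⟩} * #(Finset.univ.image (support A 2)) :=
      Finset.card_le_mul_card_image _ _ fun S _ => hfiber S
    _ ≤ N * forbmaxK k m 2 {⟨r, 2, F⟩} := by
      rw [Nat.mul_comm]
      exact Nat.mul_le_mul_right _ himage

end Counting

/-- For `ℓ ≥ 2` and any two-columned (0,1)-matrix `F` there is a
constant `c` with
`forb(m, 3, (𝒯_ℓ(3)\𝒯_ℓ(2)) ∪ {F}) ≤ c · Σ_{k=0}^{m} forbmax_k(m, F)` for all `m ≥ 1`. -/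
theorem stmt14 (ℓ : ℕ) (hℓ : 2 ≤ ℓ) (r : ℕ) (F : MatN r 2) (hF : RMat 2 F) :
    ∃ c : ℕ, ∀ m : ℕ, 1 ≤ m →
      forb m 3 ((TFam ℓ 3 \ TFam ℓ 2) ∪ {⟨r, 2, F⟩}) ≤
        c * ∑ k ∈ Finset.range (m + 1), forbmaxK k m 2 {⟨r, 2, F⟩} := by
  obtain ⟨c, hc⟩ := exists_forbK_le_mul_forbmaxK hℓ hF
  refine ⟨c, fun m _ => ?_⟩
  calc
    forb m 3 ((TFam ℓ 3 \ TFam ℓ 2) ∪ {⟨r, 2, F⟩})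
      ≤ ∑ k ∈ Finset.range (m + 1), forbK k m 3 ((TFam ℓ 3 \ TFam ℓ 2) ∪ {⟨r, 2, F⟩}) :=
        forb_le_sum_forbK
    _ ≤ ∑ k ∈ Finset.range (m + 1), c * forbmaxK k m 2 {⟨r, 2, F⟩} :=
        Finset.sum_le_sum fun k _ => hc k m
    _ = c * ∑ k ∈ Finset.range (m + 1), forbmaxK k m 2 {⟨r, 2, F⟩} :=
        (Finset.mul_sum _ _ _).symm
end

section
/- Let ℓ ≥ 2. Then there is a constant c such that for all m ≥ 2, forb(m, 3, (𝒯_ℓ(3) \ 𝒯_ℓ(2)) ∪ {F_{1,1,1,1}}) ≤ c · m · log m; that is, forb(m, 3, (𝒯_ℓ(3) \ 𝒯_ℓ(2)) ∪ {F_{1,1,1,1}}) is O(m log m). -/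
/-!
Split the columns according to whether they have at most as many `1`s as `0`s; exchanging the two
symbols, it suffices to bound the columns with at most as many `o`s as `z`s, where
`{o, z} = {0, 1}`. Among these, only boundedly many can have the same number `k` of `o`s and share
a row with an `o`. Counting incidences of rows and `o`s, there are `O(m / k)` columns with
exactly `k` `o`s, and summing over `k` gives the harmonic sum `m log m`.

For the bounded part, avoiding `F_{1,1,1,1}` forces any two of these columns to agree on where
they have `o`, or the `o`s of one of them to miss the `z`s of the other, or their `z`s to be
disjoint. Ramsey's theorem makes the alternative uniform, and each alternative then allows, within
a large family, a greedy choice of rows `rᵢ` and columns `xᵢ` such that `rᵢ` separates `xᵢ` from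
all later columns. By Ramsey's theorem again, such a sequence contains a large submatrix that is
constant below, on and above the diagonal, hence an `I_ℓ(a, b)` or `T_ℓ(a, b)`; as only those with
`a, b ∈ {0, 1}` are allowed, this restricts the entries enough to contradict how the sequence was
chosen.
-/

section Proof

open Finset

/-! ### Pivot sequences and Ramsey's theorem -/

lemma exists_pivot_seq {κ ρ : Type*} {Q : κ → ρ → κ → Prop} {h : ℕ → ℕ} (L : ℕ) {X : Finset κ}
    (step : ∀ M, ∀ S ⊆ X, h M ≤ #S → ∃ x ∈ S, ∃ r, ∃ S' ⊆ S, M ≤ #S' ∧ ∀ y ∈ S', Q x r y)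
    (hX : h^[L] 1 ≤ #X) :
    ∃ (x : Fin (L + 1) → κ) (r : Fin L → ρ), (∀ i, x i ∈ X) ∧
      ∀ (i : Fin L) (j : Fin (L + 1)), i.castSucc < j → Q (x i.castSucc) (r i) (x j) := by
  induction L generalizing X with
  | zero =>
    obtain ⟨x, hx⟩ : X.Nonempty := card_pos.1 hX
    exact ⟨fun _ => x, Fin.elim0, fun _ => hx, fun i => i.elim0⟩
  | succ L ih =>
    rw [Function.iterate_succ_apply'] at hX
    obtain ⟨x₀, hx₀, r₀, S, hSX, hS, hQ⟩ := step _ X subset_rfl hX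
    obtain ⟨x, r, hxS, hxr⟩ := ih (fun M T hT => step M T (hT.trans hSX)) hS
    refine ⟨Fin.cons x₀ x, Fin.cons r₀ r, Fin.cases hx₀ fun i => hSX (hxS i), fun i j hij => ?_⟩
    obtain ⟨j, rfl⟩ := Fin.exists_succ_eq.2 (Fin.ne_zero_of_lt hij)
    cases i using Fin.cases with
    | zero => exact hQ _ (hxS j)
    | succ i => exact hxr i j (Fin.succ_lt_succ_iff.1 hij)

lemma exists_monochromatic_subset (γ : Type*) [Finite γ] (L : ℕ) :
    ∃ N, ∀ {ι : Type*} [LinearOrder ι] (color : ι → ι → γ) (X : Finset ι), N ≤ #X →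
      ∃ Y ⊆ X, L ≤ #Y ∧ ∃ c, ∀ x ∈ Y, ∀ y ∈ Y, x < y → color x y = c := by
  classical
  have := Fintype.ofFinite γ
  set q := Fintype.card γ
  refine ⟨(fun M => q * M + 1)^[q * L] 1, fun color X hX => ?_⟩
  obtain ⟨x, r, hxX, hxr⟩ := exists_pivot_seq (Q := fun x c y => x < y ∧ color x y = c) (q * L)
    (fun M S _ hS => by
      have hne : S.Nonempty := card_pos.1 (by lia)
      set x := S.min' hne
      have : Nonempty γ := ⟨color x x⟩
      obtain ⟨c, -, hc⟩ := exists_le_card_fiber_of_mul_le_card_of_maps_to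
        (s := S.erase x) (t := univ) (f := color x) (n := M) (fun _ _ => mem_univ _)
        univ_nonempty (by rw [card_erase_of_mem (S.min'_mem hne), card_univ]; lia)
      refine ⟨x, S.min'_mem hne, c, _, (filter_subset _ _).trans (erase_subset _ _), hc,
        fun y hy => ?_⟩
      rw [mem_filter] at hy
      exact ⟨S.min'_lt_of_mem_erase_min' hne hy.1, hy.2⟩) hX
  have hx : StrictMono fun i : Fin (q * L) => x i.castSucc :=
    fun i j hij => (hxr i j.castSucc hij).1
  have : Nonempty γ := ⟨color (x 0) (x 0)⟩
  obtain ⟨c, -, hc⟩ := exists_le_card_fiber_of_mul_le_card_of_maps_to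
    (s := univ) (t := univ) (f := r) (n := L) (fun _ _ => mem_univ _) univ_nonempty
    (by rw [card_univ, card_univ, Fintype.card_fin])
  refine ⟨(univ.filter fun i => r i = c).map ⟨_, hx.injective⟩, ?_, by rwa [card_map], c, ?_⟩
  · simp only [subset_iff, mem_map]
    rintro _ ⟨i, -, rfl⟩
    exact hxX _
  · simp only [mem_map, mem_filter_univ, Function.Embedding.coeFn_mk]
    rintro _ ⟨i, rfl, rfl⟩ _ ⟨j, -, rfl⟩ hij
    exact (hxr i j.castSucc (hx.lt_iff_lt.1 hij)).2

/-! ### Double counting -/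

section DoubleCounting

variable {ρ κ : Type*}

lemma exists_mem_card_filter_mem_le_one [DecidableEq ρ] {O Z : κ → Finset ρ} {S : Finset κ}
    (hOZ : ∀ x ∈ S, #(O x) ≤ #(Z x)) (hdisj : (S : Set κ).PairwiseDisjoint Z)
    (hZ : ∃ x ∈ S, (Z x).Nonempty) : ∃ x ∈ S, ∃ r ∈ Z x, #{y ∈ S | r ∈ O y} ≤ 1 := by
  by_contra! hall
  set U := S.biUnion Z
  have hU : 0 < #U := by
    obtain ⟨x, hx, r, hr⟩ := hZ
    exact card_pos.2 ⟨r, mem_biUnion.2 ⟨x, hx, hr⟩⟩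
  have : 2 * #U ≤ #U := calc
    2 * #U = ∑ r ∈ U, 2 := by rw [sum_const, smul_eq_mul, mul_comm]
    _ ≤ ∑ r ∈ U, #{y ∈ S | r ∈ O y} := sum_le_sum fun r hr => by
      obtain ⟨x, hx, hr⟩ := mem_biUnion.1 hr
      exact hall x hx r hr
    _ = ∑ y ∈ S, #{r ∈ U | r ∈ O y} :=
      sum_card_bipartiteAbove_eq_sum_card_bipartiteBelow fun r y => r ∈ O y
    _ ≤ ∑ y ∈ S, #(Z y) := sum_le_sum fun y hy =>
      (card_le_card fun r hr => (mem_filter.1 hr).2).trans (hOZ y hy)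
    _ = #U := (card_biUnion hdisj).symm
  lia

lemma card_le_mul_harmonic [Fintype ρ] [DecidableEq ρ] {O : κ → Finset ρ} {X : Finset κ} {C : ℕ}
    (hne : ∀ x ∈ X, (O x).Nonempty) (hC : ∀ k p, #{x ∈ X | #(O x) = k ∧ p ∈ O x} ≤ C) :
    (#X : ℚ) ≤ C * Fintype.card ρ * harmonic (Fintype.card ρ) := by
  have hfiber : ∀ k, #{x ∈ X | #(O x) = k} * k ≤ Fintype.card ρ * C := fun k =>
    card_mul_le_card_mul (t := univ) (fun x p => p ∈ O x)
      (fun x hx => by simp [bipartiteAbove, (mem_filter.1 hx).2])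
      (fun p _ => by simpa only [bipartiteBelow, filter_filter] using hC k p)
  have hmaps : Set.MapsTo (fun x => #(O x)) X (Icc 1 (Fintype.card ρ)) := fun x hx =>
    mem_Icc.2 ⟨(hne x hx).card_pos, card_le_univ _⟩
  calc (#X : ℚ) = ∑ k ∈ Icc 1 (Fintype.card ρ), (#{x ∈ X | #(O x) = k} : ℚ) := by
        exact_mod_cast card_eq_sum_card_fiberwise hmaps
    _ ≤ ∑ k ∈ Icc 1 (Fintype.card ρ), C * Fintype.card ρ * (k : ℚ)⁻¹ := sum_le_sum fun k hk => by
        have hk : (0 : ℚ) < k := by exact_mod_cast (mem_Icc.1 hk).1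
        rw [← div_eq_mul_inv, le_div_iff₀ hk, mul_comm (C : ℚ)]
        exact_mod_cast hfiber k
    _ = C * Fintype.card ρ * harmonic (Fintype.card ρ) := by rw [harmonic_eq_sum_Icc, mul_sum]

end DoubleCounting

/-! ### Configurations -/

lemma exists_submatrix_eq_Tmat3 (r L : ℕ) :
    ∃ N, ∀ B : MatN N N, RMat r B →
      ∃ (g : Fin L ↪o Fin N) (a b c : ℕ), a < r ∧ b < r ∧ c < r ∧
        B.submatrix g g = Tmat3 L a b c := by
  obtain ⟨N, hN⟩ := exists_monochromatic_subset (Fin r × Fin r × Fin r) (L + 1)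
  refine ⟨N, fun B hB => ?_⟩
  obtain ⟨Y, -, hY, ⟨a, b, c⟩, hc⟩ := hN
    (fun i j => (⟨B j i, hB j i⟩, ⟨B i i, hB i i⟩, ⟨B i j, hB i j⟩)) univ (card_fin N).ge
  simp only [Prod.mk.injEq, Fin.ext_iff] at hc
  let e := Y.orderEmbOfCardLe hY
  have he : ∀ i j, i < j → B (e j) (e i) = a ∧ B (e i) (e i) = b ∧ B (e i) (e j) = c :=
    fun i j hij => hc _ (Y.orderEmbOfCardLe_mem hY i) _ (Y.orderEmbOfCardLe_mem hY j)
      (e.lt_iff_lt.2 hij)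
  refine ⟨Fin.castSuccOrderEmb.trans e, a, b, c, a.2, b.2, c.2, ?_⟩
  ext i j
  change B (e i.castSucc) (e j.castSucc) = if j < i then (a : ℕ) else if i = j then (b : ℕ) else c
  split_ifs with hji hij
  · exact (he _ _ hji).1
  · subst hij
    exact (he i.castSucc (Fin.last L) i.castSucc_lt_last).2.1
  · exact (he i.castSucc j.castSucc ((not_lt.1 hji).lt_of_ne hij :)).2.2

lemma isConfig_of_submatrix_eq {k p m n : ℕ} {F : MatN k p} {A : MatN m n} {f : Fin k → Fin m}
    {g : Fin p → Fin n} (hrow : Function.Injective F.row) (hcol : Function.Injective F.col)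
    (h : A.submatrix f g = F) : IsConfig F A := by
  subst h
  exact ⟨f, g, fun i i' hi => hrow (funext fun j => congrArg (A · (g j)) hi),
    fun j j' hj => hcol (funext fun i => congrArg (A (f i)) hj), fun _ _ => rfl⟩

section ForbiddenFamily

variable {ℓ a b : ℕ}

lemma Imat_row_injective (hab : a ≠ b) : Function.Injective (Imat ℓ a b).row := fun i j hij => by
  by_contra hne
  exact hab (by simpa [Imat, Ne.symm hne] using congrFun hij i)

lemma Imat_col_injective (hab : a ≠ b) : Function.Injective (Imat ℓ a b).col := fun i j hij => by
  by_contra hne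
  exact hab (by simpa [Imat, hne] using congrFun hij i)

lemma Tmat_row_injective (hab : a ≠ b) : Function.Injective (Tmat ℓ a b).row :=
  .of_lt_imp_ne fun i j hij h =>
    hab (by simpa [Tmat, hij] using (congrFun h i).symm)

lemma Tmat_col_injective (hab : a ≠ b) : Function.Injective (Tmat ℓ a b).col :=
  .of_lt_imp_ne fun i j hij h =>
    hab (by simpa [Tmat, hij] using congrFun h j)

lemma exists_submatrix_Tmat3_eq_Tmat (c : ℕ) :
    ∃ f g : Fin ℓ → Fin (2 * ℓ), (Tmat3 (2 * ℓ) a c b).submatrix f g = Tmat ℓ a b := by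
  refine ⟨fun i => ⟨2 * i, by lia⟩, fun j => ⟨2 * j + 1, by lia⟩, ?_⟩
  ext i j
  simp only [Tmat3, Tmat, Matrix.submatrix_apply, Fin.mk.injEq]
  split_ifs <;> lia

lemma exists_submatrix_Tmat3_eq_Imat :
    ∃ f : Fin ℓ → Fin (2 * ℓ), (Tmat3 (2 * ℓ) b a b).submatrix f f = Imat ℓ a b := by
  refine ⟨Fin.castLE (by lia), ?_⟩
  ext i j
  simp only [Tmat3, Imat, Matrix.submatrix_apply, Fin.val_castLE, Fin.ext_iff]
  split_ifs <;> lia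

lemma rMat_of_mem_TFam {r : ℕ} {M : CMat} (hM : M ∈ TFam ℓ r) : RMat r M.mat := by
  obtain ⟨a, b, ha, hb, -, rfl | rfl⟩ := hM <;> intro i j
  · simp only [Imat]
    split_ifs <;> assumption
  · simp only [Tmat]
    split_ifs <;> assumption

variable {r m n : ℕ} {A : MatN m n}

lemma lt_two_of_submatrix_eq_Imat (hℓ : 2 ≤ ℓ) (hA : AvoidsFam A (TFam ℓ r \ TFam ℓ 2))
    (ha : a < r) (hb : b < r) (hab : a ≠ b) {f : Fin ℓ → Fin m} {g : Fin ℓ → Fin n}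
    (h : A.submatrix f g = Imat ℓ a b) : a < 2 ∧ b < 2 := by
  have hmem : (⟨ℓ, ℓ, Imat ℓ a b⟩ : CMat) ∈ TFam ℓ 2 := by
    by_contra hmem
    exact hA _ ⟨⟨a, b, ha, hb, hab, .inl rfl⟩, hmem⟩
      (isConfig_of_submatrix_eq (Imat_row_injective hab) (Imat_col_injective hab) h)
  have hlt := rMat_of_mem_TFam hmem
  exact ⟨by simpa [Imat] using hlt ⟨0, by lia⟩ ⟨0, by lia⟩,
    by simpa [Imat, Fin.ext_iff] using hlt ⟨0, by lia⟩ ⟨1, by lia⟩⟩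

lemma lt_two_of_submatrix_eq_Tmat (hℓ : 2 ≤ ℓ) (hA : AvoidsFam A (TFam ℓ r \ TFam ℓ 2))
    (ha : a < r) (hb : b < r) (hab : a ≠ b) {f : Fin ℓ → Fin m} {g : Fin ℓ → Fin n}
    (h : A.submatrix f g = Tmat ℓ a b) : a < 2 ∧ b < 2 := by
  have hmem : (⟨ℓ, ℓ, Tmat ℓ a b⟩ : CMat) ∈ TFam ℓ 2 := by
    by_contra hmem
    exact hA _ ⟨⟨a, b, ha, hb, hab, .inr rfl⟩, hmem⟩
      (isConfig_of_submatrix_eq (Tmat_row_injective hab) (Tmat_col_injective hab) h)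
  have hlt := rMat_of_mem_TFam hmem
  exact ⟨by simpa [Tmat] using hlt ⟨1, by lia⟩ ⟨0, by lia⟩,
    by simpa [Tmat] using hlt ⟨0, by lia⟩ ⟨0, by lia⟩⟩

end ForbiddenFamily

/-! ### Pure crossings -/

/-- A matrix has pure crossings if every sequence of `N` pairs (row, column) in which each row
separates its own column from all later ones contains two pairs whose crossing entries lie in `P`,
and whose first own entry also lies in `P` if these are equal. Here `P` stands for `{0, 1}`: this is
all that the counting argument needs to know about avoiding `𝒯_ℓ(r) \ 𝒯_ℓ(2)`. -/
def HasPureCrossings {ρ κ V : Type*} (N : ℕ) (P : Set V) (A : Matrix ρ κ V) : Prop :=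
  ∀ (r : Fin N → ρ) (x : Fin N → κ), (∀ i j, i < j → A (r i) (x i) ≠ A (r i) (x j)) →
    ∃ i j, i < j ∧ A (r i) (x j) ∈ P ∧ A (r j) (x i) ∈ P ∧
      (A (r i) (x j) = A (r j) (x i) → A (r i) (x i) ∈ P)

lemma exists_hasPureCrossings_of_avoidsFam {ℓ : ℕ} (hℓ : 2 ≤ ℓ) (r : ℕ) :
    ∃ N, ∀ {m n : ℕ} (A : MatN m n), RMat r A → AvoidsFam A (TFam ℓ r \ TFam ℓ 2) →
      HasPureCrossings N {0, 1} A := by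
  obtain ⟨N, hN⟩ := exists_submatrix_eq_Tmat3 r (2 * ℓ)
  refine ⟨N, fun A hA hav s x hsep => ?_⟩
  obtain ⟨g, c, a, b, hc, ha, hb, hg⟩ := hN (A.submatrix s x) fun i j => hA _ _
  have hentry (i j) : A (s (g i)) (x (g j)) = Tmat3 (2 * ℓ) c a b i j := congrFun₂ hg i j
  let i₀ : Fin (2 * ℓ) := ⟨0, by lia⟩
  let i₁ : Fin (2 * ℓ) := ⟨1, by lia⟩
  have h01 : g i₀ < g i₁ := g.strictMono Nat.zero_lt_one
  have haa : A (s (g i₀)) (x (g i₀)) = a := by simp [hentry, Tmat3]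
  have hbb : A (s (g i₀)) (x (g i₁)) = b := by simp [hentry, Tmat3, i₀, i₁]
  have hcc : A (s (g i₁)) (x (g i₀)) = c := by simp [hentry, Tmat3, i₀, i₁]
  have hab : a ≠ b := haa ▸ hbb ▸ hsep _ _ h01
  refine ⟨g i₀, g i₁, h01, ?_⟩
  simp only [haa, hbb, hcc, Set.mem_insert_iff, Set.mem_singleton_iff]
  by_cases hbc : b = c
  · subst hbc
    obtain ⟨f, hf⟩ := exists_submatrix_Tmat3_eq_Imat (ℓ := ℓ) (a := a) (b := b)
    have := lt_two_of_submatrix_eq_Imat hℓ hav ha hb hab (f := s ∘ g ∘ f) (g := x ∘ g ∘ f)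
      (by rw [← hf, ← hg]; rfl)
    lia
  · obtain ⟨f, f', hf⟩ := exists_submatrix_Tmat3_eq_Tmat (ℓ := ℓ) (a := c) (b := b) a
    have := lt_two_of_submatrix_eq_Tmat hℓ hav hc hb (Ne.symm hbc) (f := s ∘ g ∘ f)
      (g := x ∘ g ∘ f') (by rw [← hf, ← hg]; rfl)
    lia

section Columns

variable {ρ κ V : Type*} {N : ℕ} {P : Set V} {A : Matrix ρ κ V} {o z : V}

lemma HasPureCrossings.exists_of_pivot (hA : HasPureCrossings N P A) {Q : κ → ρ → κ → Prop}
    (hQ : ∀ x r y, Q x r y → A r x ≠ A r y) {h : ℕ → ℕ} {X : Finset κ}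
    (step : ∀ M, ∀ S ⊆ X, h M ≤ #S → ∃ x ∈ S, ∃ r, ∃ S' ⊆ S, M ≤ #S' ∧ ∀ y ∈ S', Q x r y)
    (hX : h^[N] 1 ≤ #X) :
    ∃ x ∈ X, ∃ r, ∃ y ∈ X, ∃ s, ∃ w ∈ X, Q x r y ∧ Q y s w ∧ A r y ∈ P ∧ A s x ∈ P ∧
      (A r y = A s x → A r x ∈ P) := by
  obtain ⟨x, r, hxX, hxr⟩ := exists_pivot_seq N step hX
  obtain ⟨i, j, hij, hcross⟩ := hA r (fun i => x i.castSucc)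
    fun i j hij => hQ _ _ _ (hxr i j.castSucc hij)
  exact ⟨_, hxX i.castSucc, r i, _, hxX j.castSucc, r j, _, hxX (Fin.last N),
    hxr i j.castSucc hij, hxr j _ j.castSucc_lt_last, hcross⟩

lemma HasPureCrossings.card_lt_of_exists_row (hA : HasPureCrossings N P A) {h : ℕ → ℕ}
    {X : Finset κ}
    (step : ∀ M, ∀ S ⊆ X, h M ≤ #S →
      ∃ x ∈ S, ∃ r, A r x ∈ P ∧ ∃ S' ⊆ S, M ≤ #S' ∧ ∀ y ∈ S', A r y ∉ P) :
    #X < h^[N] 1 := by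
  by_contra! hX
  obtain ⟨x, -, r, y, -, s, w, -, ⟨-, hy⟩, -, hyP, -⟩ :=
    hA.exists_of_pivot (Q := fun x r y => A r x ∈ P ∧ A r y ∉ P)
      (fun x r y hxy heq => hxy.2 (heq ▸ hxy.1))
      (fun M S hSX hS => by
        obtain ⟨x, hx, r, hxP, S', hS', hM, hyP⟩ := step M S hSX hS
        exact ⟨x, hx, r, S', hS', hM, fun y hy => ⟨hxP, hyP y hy⟩⟩) hX
  exact hy hyP

/-! ### Families of columns -/

variable [Fintype ρ] [DecidableEq V]

/-- The set of rows in which the column `x` of `A` has the symbol `v`. -/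
def level (A : Matrix ρ κ V) (v : V) (x : κ) : Finset ρ := {r | A r x = v}

@[simp]
lemma mem_level {v : V} {x : κ} {r : ρ} : r ∈ level A v x ↔ A r x = v := by
  simp [level]

/-- No two columns of `A` show all of the patterns `(o, o)`, `(o, z)`, `(z, o)`, `(z, z)` in their
rows; for `o = 1` and `z = 0` this says that `A` has no configuration `F_{1,1,1,1}`. -/
def CrossFree (o z : V) (A : Matrix ρ κ V) : Prop :=
  ∀ x y, Disjoint (level A o x) (level A o y) ∨ Disjoint (level A o x) (level A z y) ∨
    Disjoint (level A z x) (level A o y) ∨ Disjoint (level A z x) (level A z y)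

lemma CrossFree.symm (h : CrossFree o z A) : CrossFree z o A := fun x y => by
  have := h x y
  tauto

lemma HasPureCrossings.card_lt_of_level_eq (hA : HasPureCrossings N {o, z} A)
    (hinj : Function.Injective A.col) {X : Finset κ}
    (hX : ∀ x ∈ X, ∀ y ∈ X, level A o x = level A o y) :
    #X < (fun M => 2 * M + 2)^[N] 1 := by
  classical
  have not_o : ∀ x ∈ X, ∀ y ∈ X, ∀ w ∈ X, ∀ r, A r x ≠ A r y → A r w ≠ o := by
    intro x hx y hy w hw r hne hrw
    have hrw : r ∈ level A o w := mem_level.2 hrw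
    exact hne ((mem_level.1 (hX w hw x hx ▸ hrw)).trans (mem_level.1 (hX w hw y hy ▸ hrw)).symm)
  by_contra! hcard
  obtain ⟨x, hx, r, y, hy, s, w, hw, hxy, hyw, hyP, hxP, hdiag⟩ :=
    hA.exists_of_pivot (Q := fun x r y => A r x ≠ A r y) (fun _ _ _ => id)
      (fun M S _ hS => by
        obtain ⟨x, hx, y, hy, hne⟩ := one_lt_card.1 (show 1 < #S by lia)
        obtain ⟨r, hr⟩ := Function.ne_iff.1 (hinj.ne hne)
        have hsplit := card_filter_add_card_filter_not (s := S) (fun w => A r w = A r x)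
        obtain hM | hM := le_total (M + 1) #{w ∈ S | A r w = A r x}
        · exact ⟨y, hy, r, {w ∈ S | A r w = A r x}, filter_subset _ _, by lia,
            fun w hw heq => hr (heq.trans (mem_filter.1 hw).2).symm⟩
        · exact ⟨x, hx, r, {w ∈ S | ¬ A r w = A r x}, filter_subset _ _, by lia,
            fun w hw heq => (mem_filter.1 hw).2 heq.symm⟩) hcard
  have hyz : A r y = z := hyP.resolve_left (not_o x hx y hy y hy r hxy)
  have hxz : A s x = z := hxP.resolve_left (not_o y hy w hw x hx s hyw)
  have hxz' : A r x = z :=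
    (hdiag (hyz.trans hxz.symm)).resolve_left (not_o x hx y hy x hx r hxy)
  exact hxy (hxz'.trans hyz.symm)

/-- The column `y` replaces the symbol `o` of the column `x` by symbols other than `z` only, and
does so at least once. -/
def Fades (o z : V) (A : Matrix ρ κ V) (x y : κ) : Prop :=
  ¬ level A o x ⊆ level A o y ∧ Disjoint (level A o x) (level A z y)

lemma Fades.ne_of_eq {x y : κ} (h : Fades o z A x y) {r : ρ} (hr : A r x = o) : A r y ≠ z :=
  fun hz => disjoint_left.1 h.2 (mem_level.2 hr) (mem_level.2 hz)

lemma Fades.exists_notMem_pair {x y : κ} (h : Fades o z A x y) :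
    ∃ r, A r x = o ∧ A r y ∉ ({o, z} : Set V) := by
  obtain ⟨r, hx, hy⟩ := not_subset.1 h.1
  rw [mem_level] at hx hy
  exact ⟨r, hx, by simp [hy, h.ne_of_eq hx]⟩

lemma HasPureCrossings.exists_row_of_fades (hA : HasPureCrossings N {o, z} A) {X : Finset κ}
    {x₀ : κ} (hx₀ : ∀ y ∈ X, Fades o z A x₀ y) {M : ℕ} (hX : N * M + 1 ≤ #X) :
    ∃ r, A r x₀ = o ∧ ∃ Y ⊆ X, M ≤ #Y ∧ ∀ y ∈ Y, A r y ∉ ({o, z} : Set V) := by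
  classical
  by_contra! hall
  -- Each step now discards fewer than `M` columns, and the rows may all be taken with `A r x₀ = o`.
  -- There `z` cannot occur, so both crossing entries are `o` and the own entry has to be pure.
  have hfew : ∀ r, A r x₀ = o → #{y ∈ X | A r y ∉ ({o, z} : Set V)} < M := fun r hr => by
    by_contra! hM
    obtain ⟨y, hy, hyP⟩ := hall r hr _ (filter_subset _ _) hM
    exact (mem_filter.1 hy).2 hyP
  have hM : 0 < M := by
    obtain ⟨y, hy⟩ : X.Nonempty := card_pos.1 (by lia)
    obtain ⟨r, hr, -⟩ := (hx₀ y hy).exists_notMem_pair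
    exact (Nat.zero_le _).trans_lt (hfew r hr)
  obtain ⟨x, hx, r, y, hy, s, _, -, ⟨hr, hrx, -⟩, ⟨hs, -, -⟩, hyP, hxP, hdiag⟩ :=
    hA.exists_of_pivot (X := X) (h := fun K => K + M)
      (Q := fun x r y => A r x₀ = o ∧ A r x ∉ ({o, z} : Set V) ∧ A r y ∈ ({o, z} : Set V))
      (fun x r y hxy heq => hxy.2.1 (heq ▸ hxy.2.2))
      (fun K S hSX hS => by
        obtain ⟨x, hx⟩ : S.Nonempty := card_pos.1 (by lia)
        obtain ⟨r, hr, hrx⟩ := (hx₀ x (hSX hx)).exists_notMem_pair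
        refine ⟨x, hx, r, {y ∈ S | A r y ∈ ({o, z} : Set V)}, filter_subset _ _, ?_,
          fun y hy => ⟨hr, hrx, (mem_filter.1 hy).2⟩⟩
        have hsplit := card_filter_add_card_filter_not (s := S)
          (fun y => A r y ∈ ({o, z} : Set V))
        have hle := card_le_card (filter_subset_filter (fun y => A r y ∉ ({o, z} : Set V)) hSX)
        have := hfew r hr
        lia)
      (by rw [add_right_iterate, smul_eq_mul]; lia)
  have hyo : A r y = o := hyP.resolve_right ((hx₀ y hy).ne_of_eq hr)
  have hxo : A s x = o := hxP.resolve_right ((hx₀ x hx).ne_of_eq hs)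
  exact hrx (hdiag (hyo.trans hxo.symm))

lemma HasPureCrossings.card_lt_of_fades [LinearOrder κ] (hA : HasPureCrossings N {o, z} A)
    {X : Finset κ} (hX : ∀ x ∈ X, ∀ y ∈ X, x < y → Fades o z A x y) :
    #X < (fun M => N * M + 2)^[N] 1 := by
  refine hA.card_lt_of_exists_row fun M S hSX hS => ?_
  have hne : S.Nonempty := card_pos.1 (by lia)
  set x := S.min' hne
  have hx : x ∈ S := S.min'_mem hne
  obtain ⟨r, hr, Y, hY, hM, hYP⟩ := hA.exists_row_of_fades (x₀ := x) (X := S.erase x) (M := M)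
    (fun y hy => hX x (hSX hx) y (hSX (mem_of_mem_erase hy)) (S.min'_lt_of_mem_erase_min' hne hy))
    (by rw [card_erase_of_mem hx]; lia)
  exact ⟨x, hx, r, .inl hr, Y, hY.trans (erase_subset _ _), hM, hYP⟩

lemma HasPureCrossings.card_lt_of_pairwiseDisjoint (hA : HasPureCrossings N {o, z} A)
    {X : Finset κ} (hne : ∀ x ∈ X, (level A o x).Nonempty)
    (hoz : ∀ x ∈ X, #(level A o x) ≤ #(level A z x))
    (hdisj : (X : Set κ).PairwiseDisjoint (level A z)) :
    #X < (fun M => M + 2)^[N] 1 := by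
  classical
  refine hA.card_lt_of_exists_row fun M S hSX hS => ?_
  obtain ⟨x, hx, r, hr, hfew⟩ := exists_mem_card_filter_mem_le_one
    (fun y hy => hoz y (hSX hy)) (hdisj.subset (coe_subset.2 hSX))
    (by
      obtain ⟨y, hy⟩ : S.Nonempty := card_pos.1 (by lia)
      exact ⟨y, hy, card_pos.1 ((hne y (hSX hy)).card_pos.trans_le (hoz y (hSX hy)))⟩)
  refine ⟨x, hx, r, .inr (mem_level.1 hr), (S \ {y ∈ S | r ∈ level A o y}).erase x,
    (erase_subset _ _).trans sdiff_subset, ?_, fun y hy => ?_⟩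
  · have h₁ := le_card_sdiff {y ∈ S | r ∈ level A o y} S
    have h₂ := pred_card_le_card_erase (a := x) (s := S \ {y ∈ S | r ∈ level A o y})
    lia
  · simp only [mem_erase, mem_sdiff, mem_filter, mem_level] at hy
    rintro (hyo | hyz)
    · exact hy.2.2 ⟨hy.2.1, hyo⟩
    · exact disjoint_left.1 (hdisj (hSX hx) (hSX hy.2.1) hy.1.symm) hr (mem_level.2 hyz)

lemma CrossFree.level_eq_or_fades_or_disjoint (h : CrossFree o z A) {x y : κ}
    (hcard : #(level A o x) = #(level A o y)) {p : ρ} (hx : A p x = o) (hy : A p y = o) :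
    level A o x = level A o y ∨ Fades o z A x y ∨ Fades o z A y x ∨
      Disjoint (level A z x) (level A z y) := by
  by_cases heq : level A o x = level A o y
  · exact .inl heq
  obtain hd | hd | hd | hd := h x y
  · exact absurd (mem_level.2 hy) (disjoint_left.1 hd (mem_level.2 hx))
  · exact .inr (.inl ⟨fun hs => heq (eq_of_subset_of_card_le hs hcard.ge), hd⟩)
  · exact .inr (.inr (.inl ⟨fun hs => heq (eq_of_subset_of_card_le hs hcard.le).symm, hd.symm⟩))
  · exact .inr (.inr (.inr hd))

lemma exists_card_le_of_common_row (N : ℕ) :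
    ∃ C, ∀ {ρ κ V : Type*} [Fintype ρ] [DecidableEq V] {A : Matrix ρ κ V} {o z : V},
      HasPureCrossings N {o, z} A → Function.Injective A.col → CrossFree o z A →
      ∀ (X : Finset κ) (k : ℕ) (p : ρ), (∀ x ∈ X, #(level A o x) ≤ #(level A z x)) →
        (∀ x ∈ X, #(level A o x) = k) → (∀ x ∈ X, A p x = o) → #X ≤ C := by
  classical
  set L := (fun M => 2 * M + 2)^[N] 1 + (fun M => N * M + 2)^[N] 1 + (fun M => M + 2)^[N] 1
  obtain ⟨C, hC⟩ := exists_monochromatic_subset (Fin 4) L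
  refine ⟨C, fun {ρ κ V _ _ A o z} hA hinj hfree X k p hoz hk hp => ?_⟩
  obtain ⟨_, -⟩ := exists_wellFoundedLT κ
  by_contra! hX
  let R : Fin 4 → κ → κ → Prop := ![fun x y => level A o x = level A o y, Fades o z A,
    fun x y => Fades o z A y x, fun x y => Disjoint (level A z x) (level A z y)]
  have hR : ∀ x ∈ X, ∀ y ∈ X, ∃ c, R c x y := fun x hx y hy => by
    obtain h | h | h | h := hfree.level_eq_or_fades_or_disjoint
      ((hk x hx).trans (hk y hy).symm) (hp x hx) (hp y hy)
    exacts [⟨0, h⟩, ⟨1, h⟩, ⟨2, h⟩, ⟨3, h⟩]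
  choose! color hcolor using hR
  obtain ⟨Y, hYX, hY, c, hc⟩ := hC color X hX.le
  have hYR : ∀ x ∈ Y, ∀ y ∈ Y, x < y → R c x y := fun x hx y hy hxy =>
    hc x hx y hy hxy ▸ hcolor x (hYX hx) y (hYX hy)
  have hYL : #Y < L := by
    fin_cases c
    · have : #Y < (fun M => 2 * M + 2)^[N] 1 := hA.card_lt_of_level_eq hinj fun x hx y hy => by
        obtain h | rfl | h := lt_trichotomy x y
        exacts [hYR x hx y hy h, rfl, (hYR y hy x hx h).symm]
      lia
    · have : #Y < (fun M => N * M + 2)^[N] 1 := hA.card_lt_of_fades hYR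
      lia
    · have : #Y < (fun M => N * M + 2)^[N] 1 :=
        hA.card_lt_of_fades (κ := κᵒᵈ) fun x hx y hy => hYR y hy x hx
      lia
    · have : #Y < (fun M => M + 2)^[N] 1 := hA.card_lt_of_pairwiseDisjoint
        (fun x hx => ⟨p, mem_level.2 (hp x (hYX hx))⟩) (fun x hx => hoz x (hYX hx))
        fun x hx y hy hne => hne.lt_or_gt.elim (hYR x hx y hy) fun h => (hYR y hy x hx h).symm
      lia
  exact hYL.not_ge hY

lemma exists_card_le_mul_log (N : ℕ) :
    ∃ C : ℕ, ∀ {ρ κ V : Type*} [Fintype ρ] [DecidableEq V] {A : Matrix ρ κ V} {o z : V},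
      HasPureCrossings N {o, z} A → Function.Injective A.col → CrossFree o z A →
      ∀ X : Finset κ, (∀ x ∈ X, #(level A o x) ≤ #(level A z x)) →
        (#X : ℝ) ≤ C * (1 + Fintype.card ρ * (1 + Real.log (Fintype.card ρ))) := by
  classical
  obtain ⟨C, hC⟩ := exists_card_le_of_common_row N
  set D := (fun M => 2 * M + 2)^[N] 1
  refine ⟨C + D, fun {ρ κ V _ _ A o z} hA hinj hfree X hoz => ?_⟩
  set m := Fintype.card ρ
  have hempty : #{x ∈ X | level A o x = ∅} ≤ D :=
    (hA.card_lt_of_level_eq hinj fun x hx y hy =>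
      (mem_filter.1 hx).2.trans (mem_filter.1 hy).2.symm).le
  have hnonempty : (#{x ∈ X | level A o x ≠ ∅} : ℚ) ≤ C * m * harmonic m :=
    card_le_mul_harmonic (fun x hx => nonempty_iff_ne_empty.2 (mem_filter.1 hx).2) fun k p => by
      refine hC hA hinj hfree _ k p
        (fun x hx => hoz x (filter_subset _ _ (filter_subset _ _ hx))) ?_ ?_ <;> simp +contextual
  have hharm : (C * m * harmonic m : ℝ) ≤ C * m * (1 + Real.log m) := by
    gcongr
    exact harmonic_le_one_add_log m
  have hnonempty' : (#{x ∈ X | level A o x ≠ ∅} : ℝ) ≤ C * m * (1 + Real.log m) :=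
    le_trans (by exact_mod_cast hnonempty) hharm
  have hlog : 0 ≤ (m : ℝ) * (1 + Real.log m) :=
    mul_nonneg m.cast_nonneg (add_nonneg zero_le_one (Real.log_natCast_nonneg m))
  calc (#X : ℝ) = #{x ∈ X | level A o x = ∅} + #{x ∈ X | level A o x ≠ ∅} := by
        exact_mod_cast (card_filter_add_card_filter_not _).symm
    _ ≤ D + C * m * (1 + Real.log m) := add_le_add (by exact_mod_cast hempty) hnonempty'
    _ ≤ (C + D : ℕ) * (1 + m * (1 + Real.log m)) := by
        push_cast
        nlinarith [mul_nonneg D.cast_nonneg hlog, C.cast_nonneg (α := ℝ)]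

end Columns

lemma crossFree_of_not_isConfig_Fabcd {m n : ℕ} {A : MatN m n}
    (hA : ¬ IsConfig (Fabcd 1 1 1 1) A) : CrossFree 1 0 A := by
  intro x y
  by_contra! h
  simp only [not_disjoint_iff, mem_level] at h
  obtain ⟨⟨r₁, hx₁, hy₁⟩, ⟨r₂, hx₂, hy₂⟩, ⟨r₃, hx₃, hy₃⟩, ⟨r₄, hx₄, hy₄⟩⟩ := h
  refine hA (isConfig_of_submatrix_eq (f := ![r₁, r₂, r₃, r₄]) (g := ![x, y]) (by decide)
    (by decide) ?_)
  ext i j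
  fin_cases i <;> fin_cases j <;> assumption

lemma exists_card_le_of_avoidsFam {ℓ : ℕ} (hℓ : 2 ≤ ℓ) (r : ℕ) :
    ∃ C : ℕ, ∀ {m n : ℕ} (A : MatN m n), RMat r A → SimpleM A →
      AvoidsFam A ((TFam ℓ r \ TFam ℓ 2) ∪ {⟨1 + 1 + 1 + 1, 2, Fabcd 1 1 1 1⟩}) →
      (n : ℝ) ≤ C * (1 + m * (1 + Real.log m)) := by
  obtain ⟨N, hN⟩ := exists_hasPureCrossings_of_avoidsFam hℓ r
  obtain ⟨C, hC⟩ := exists_card_le_mul_log N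
  refine ⟨2 * C, fun {m n} A hA hsimple hav => ?_⟩
  have hinj : Function.Injective A.col := fun x y hxy => hsimple x y (congrFun hxy)
  have hpure : HasPureCrossings N {0, 1} A := hN A hA fun F hF => hav F (.inl hF)
  have hfree : CrossFree 1 0 A := crossFree_of_not_isConfig_Fabcd (hav _ (.inr rfl))
  have hfew := hC (Set.pair_comm 0 1 ▸ hpure) hinj hfree
    {x | #(level A 1 x) ≤ #(level A 0 x)} fun x hx => (mem_filter.1 hx).2
  have hmany := hC hpure hinj hfree.symm
    {x | ¬ #(level A 1 x) ≤ #(level A 0 x)} fun x hx => (not_le.1 (mem_filter.1 hx).2).le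
  rw [Fintype.card_fin] at hfew hmany
  have hsplit := card_filter_add_card_filter_not (s := univ)
    fun x => #(level A 1 x) ≤ #(level A 0 x)
  rw [card_fin] at hsplit
  rw [← hsplit]
  push_cast
  linarith

lemma forb_le {m r B : ℕ} {𝓕 : Set CMat}
    (hB : ∀ {n} (A : MatN m n), RMat r A → SimpleM A → AvoidsFam A 𝓕 → n ≤ B) :
    forb m r 𝓕 ≤ B :=
  csSup_le' fun _ ⟨A, hA, hsimple, hav⟩ => hB A hA hsimple hav

lemma one_add_mul_one_add_log_le {x : ℝ} (hx : 2 ≤ x) :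
    1 + x * (1 + Real.log x) ≤ 4 * (x * Real.log x) := by
  have hlog : 1 / 2 ≤ Real.log x := by
    linarith [Real.log_two_gt_d9, Real.log_le_log zero_lt_two hx]
  nlinarith

theorem stmt19_general (r ℓ : ℕ) (hℓ : 2 ≤ ℓ) :
    ∃ c : ℝ, ∀ m : ℕ, 2 ≤ m →
      (forb m r ((TFam ℓ r \ TFam ℓ 2) ∪ {⟨1 + 1 + 1 + 1, 2, Fabcd 1 1 1 1⟩}) : ℝ) ≤
        c * (m : ℝ) * Real.log (m : ℝ) := by
  obtain ⟨C, hC⟩ := exists_card_le_of_avoidsFam hℓ r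
  refine ⟨4 * C, fun m hm => ?_⟩
  refine (Nat.le_floor_iff (by positivity)).1 (forb_le fun {n} A hA hsimple hav => Nat.le_floor ?_)
  calc (n : ℝ) ≤ C * (1 + m * (1 + Real.log m)) := hC A hA hsimple hav
    _ ≤ C * (4 * (m * Real.log m)) := by
        gcongr
        exact one_add_mul_one_add_log_le (by exact_mod_cast hm)
    _ = 4 * C * m * Real.log m := by ring

end Proof

/-- For `ℓ ≥ 2`, `forb(m, 3, (𝒯_ℓ(3) \ 𝒯_ℓ(2)) ∪ {F_{1,1,1,1}})` is
`O(m log m)`. -/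
theorem stmt19 (ℓ : ℕ) (hℓ : 2 ≤ ℓ) :
    ∃ c : ℝ, ∀ m : ℕ, 2 ≤ m →
      (forb m 3 ((TFam ℓ 3 \ TFam ℓ 2) ∪ {⟨1 + 1 + 1 + 1, 2, Fabcd 1 1 1 1⟩}) : ℝ) ≤
        c * (m : ℝ) * Real.log (m : ℝ) :=
  stmt19_general 3 ℓ hℓ
end
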